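/- Substituted form of Andrews's identity: for every nonnegative integer m and complex y, z avoiding poles, Σ_{k=0}^{2m+1} (-2m-1)_k (y+2z+2m+2)_k (y+z+1/2)_k (y+2z+m+1)_k (z+m+1)_k / (k! (y/2+z+1/2)_k (y/2+z+1)_k (2z+2m+2)_k (2y+2z+1)_k) = 0. -/

import Mathlib

/-- The rising factorial (Pochhammer symbol) `(a)_k`. -/
noncomputable def rf (a : ℂ) (k : ℕ) : ℂ := (ascPochhammer ℂ k).eval a

/-!
Put `α = y / 2 + z + 1 / 2`, `b = y + z + 1 / 2` and `c = z + m + 1`, so that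
`b + c = 2 * α + m + 1 / 2`. The Pfaff–Saalschütz theorem expands
`4 ^ k * (b)_k * (c)_k / ((2 * b)_k * (2 * c)_k)` as a finite balanced sum over `j`. After
interchanging the two summations, the inner sum over `k` is, with `n = 2 * (m - j) + 1`, a multiple
of the coefficient of `t ^ n` in `(1 - t) ^ (2 * w - a) * (1 - t + t ^ 2) ^ (-w)`, where
`2 * w + 1 = 2 * a + n`. The substitution `t ↦ t / (t - 1)` shows that this coefficient equals
`(-1) ^ n` times itself, and `n` is odd, so it vanishes.
-/

open Finset

local notation:max "⦅" a "⦆_" k:max => Polynomial.eval a (ascPochhammer _ k)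

lemma descFactorial_add_mul_descFactorial (d l i : ℕ) :
    (d + l).descFactorial (d + i) * (d + i).descFactorial d =
      (d + i).factorial * ((d + l).descFactorial d * l.choose i) := by
  have hsplit := Nat.descFactorial_mul_descFactorial (n := d + l) (Nat.le_add_right d i)
  have hfactorial := Nat.factorial_mul_descFactorial (Nat.le_add_right d i)
  rw [Nat.add_sub_cancel_left] at hsplit hfactorial
  rw [← hsplit, ← hfactorial, Nat.add_sub_cancel_left, Nat.descFactorial_eq_factorial_mul_choose l]
  ring

section CommRing

variable {R : Type*} [CommRing R]

lemma ascPochhammer_eval_succ_left (a : R) (k : ℕ) : ⦅a⦆_(k + 1) = a * ⦅a + 1⦆_k := by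
  simp [ascPochhammer_succ_left]

lemma ascPochhammer_eval_add (a : R) (k l : ℕ) : ⦅a⦆_(k + l) = ⦅a⦆_k * ⦅a + k⦆_l := by
  simp [← ascPochhammer_mul]

lemma ascPochhammer_eval_add_one_sub (a : R) (k : ℕ) :
    ⦅a + 1⦆_(k + 1) - ⦅a⦆_(k + 1) = (k + 1) * ⦅a + 1⦆_k := by
  rw [ascPochhammer_succ_eval, ascPochhammer_eval_succ_left]
  ring

lemma ascPochhammer_eval_neg_natCast (n k : ℕ) :
    ⦅(-n : R)⦆_k = (-1) ^ k * (n.descFactorial k : R) := by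
  rw [ascPochhammer_eval_neg_eq_descPochhammer, descPochhammer_eval_eq_descFactorial]

lemma ascPochhammer_eval_ne_zero_of_le {a : R} {k l : ℕ} (hkl : k ≤ l) (hl : ⦅a⦆_l ≠ 0) :
    ⦅a⦆_k ≠ 0 := by
  obtain ⟨d, rfl⟩ := Nat.exists_eq_add_of_le hkl
  rw [ascPochhammer_eval_add] at hl
  exact left_ne_zero_of_mul hl

lemma sum_antidiagonal_choose_succ_mul_of_fst {f g : ℕ → ℕ → R} (hzero : ∀ l, g 0 l = 0)
    (hsucc : ∀ i l, g (i + 1) l = (i + 1) * f i l) (n : ℕ) :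
    ∑ p ∈ antidiagonal (n + 1), ((n + 1).choose p.1 : R) * g p.1 p.2 =
      (n + 1) * ∑ p ∈ antidiagonal n, (n.choose p.1 : R) * f p.1 p.2 := by
  rw [Nat.sum_antidiagonal_succ, hzero, mul_zero, zero_add, mul_sum]
  refine sum_congr rfl fun p _ ↦ ?_
  have habsorb : ((n : R) + 1) * n.choose p.1 = (n + 1).choose (p.1 + 1) * (p.1 + 1) := by
    exact_mod_cast congrArg (Nat.cast (R := R)) (Nat.add_one_mul_choose_eq n p.1)
  rw [hsucc]
  linear_combination -f p.1 p.2 * habsorb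

lemma sum_antidiagonal_choose_succ_mul_of_snd {f g : ℕ → ℕ → R} (hzero : ∀ i, g i 0 = 0)
    (hsucc : ∀ i l, g i (l + 1) = (l + 1) * f i l) (n : ℕ) :
    ∑ p ∈ antidiagonal (n + 1), ((n + 1).choose p.1 : R) * g p.1 p.2 =
      (n + 1) * ∑ p ∈ antidiagonal n, (n.choose p.1 : R) * f p.1 p.2 := by
  have hswap (N : ℕ) (h : ℕ → ℕ → R) :
      ∑ p ∈ antidiagonal N, (N.choose p.1 : R) * h p.1 p.2 =
        ∑ p ∈ antidiagonal N, (N.choose p.1 : R) * h p.2 p.1 := by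
    rw [← Nat.sum_antidiagonal_swap]
    refine sum_congr rfl fun p hp ↦ ?_
    rw [Prod.fst_swap, Prod.snd_swap, Nat.choose_symm_of_eq_add (mem_antidiagonal.1 hp).symm]
  rw [hswap, hswap n]
  exact sum_antidiagonal_choose_succ_mul_of_fst (f := Function.swap f) (g := Function.swap g) hzero
    (fun i l ↦ hsucc l i) n

lemma sum_antidiagonal_choose_succ_mul_eq (f : ℕ → ℕ → R) (n : ℕ) :
    ∑ p ∈ antidiagonal (n + 1), ((n + 1).choose p.1 : R) * f p.1 p.2 =
      ∑ p ∈ antidiagonal n, (n.choose p.1 : R) * (f p.1 (p.2 + 1) + f (p.1 + 1) p.2) := by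
  rw [sum_antidiagonal_choose_succ_mul, ← sum_add_distrib]
  refine sum_congr rfl fun p hp ↦ ?_
  rw [mul_add, Nat.choose_symm_of_eq_add (mem_antidiagonal.1 hp).symm]

/-- The general term of `trinomialSum`, without its binomial coefficient. -/
noncomputable def trinomialTerm (a w : R) (i l : ℕ) : R :=
  (-1) ^ i * ⦅a + 2 * i⦆_l * ⦅w⦆_i

/-- `n!` times the coefficient of `t ^ n` in `(1 - t) ^ (2 * w - a) * (1 - t + t ^ 2) ^ (-w)`,
as obtained by expanding `(1 - t) ^ (-a) * (1 + t / (1 - t) ^ 2) ^ (-w)` in powers of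
`t / (1 - t) ^ 2`. -/
noncomputable def trinomialSum (n : ℕ) (a w : R) : R :=
  ∑ p ∈ antidiagonal n, (n.choose p.1 : R) * trinomialTerm a w p.1 p.2

lemma trinomialSum_zero (a w : R) : trinomialSum 0 a w = 1 := by
  simp [trinomialSum, trinomialTerm]

lemma trinomialSum_one (a w : R) : trinomialSum 1 a w = a - w := by
  simp [trinomialSum, trinomialTerm, Nat.sum_antidiagonal_succ, sub_eq_add_neg]

lemma trinomialTerm_succ_left (a w : R) (i l : ℕ) :
    trinomialTerm a w (i + 1) l = -w * trinomialTerm (a + 2) (w + 1) i l := by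
  have hshift : a + 2 * ((i + 1 : ℕ) : R) = a + 2 + 2 * i := by push_cast; ring
  rw [trinomialTerm, trinomialTerm, hshift, ascPochhammer_eval_succ_left]
  ring

lemma trinomialTerm_succ_right (a w : R) (i l : ℕ) :
    trinomialTerm a w i (l + 1) = (a + 2 * i + l) * trinomialTerm a w i l := by
  rw [trinomialTerm, trinomialTerm, ascPochhammer_succ_eval]
  ring

lemma trinomialTerm_succ_right' (a w : R) (i l : ℕ) :
    trinomialTerm a w i (l + 1) = (a + 2 * i) * trinomialTerm (a + 1) w i l := by
  rw [trinomialTerm, trinomialTerm, ascPochhammer_eval_succ_left, add_right_comm]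
  ring

lemma sum_antidiagonal_choose_mul_fst_mul_trinomialTerm (n : ℕ) (a w : R) :
    ∑ p ∈ antidiagonal (n + 1), ((n + 1).choose p.1 : R) * (p.1 * trinomialTerm a w p.1 p.2) =
      -((n + 1) * w * trinomialSum n (a + 2) (w + 1)) := by
  rw [sum_antidiagonal_choose_succ_mul_of_fst
    (f := fun i l ↦ -w * trinomialTerm (a + 2) (w + 1) i l)
    (g := fun i l ↦ i * trinomialTerm a w i l) (fun l ↦ by simp)
    (fun i l ↦ by rw [trinomialTerm_succ_left]; push_cast; ring)]
  simp only [trinomialSum, mul_left_comm _ (-w), ← mul_sum]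
  ring

lemma trinomialSum_add_one_left (n : ℕ) (a w : R) :
    trinomialSum (n + 1) (a + 1) w =
      trinomialSum (n + 1) a w + (n + 1) * trinomialSum n (a + 1) w := by
  rw [← sub_eq_iff_eq_add']
  simp only [trinomialSum, ← sum_sub_distrib, ← mul_sub]
  refine sum_antidiagonal_choose_succ_mul_of_snd
    (g := fun i l ↦ trinomialTerm (a + 1) w i l - trinomialTerm a w i l)
    (fun i ↦ by simp [trinomialTerm]) (fun i l ↦ ?_) n
  rw [trinomialTerm_succ_right, trinomialTerm_succ_right']
  ring

lemma trinomialSum_add_one_right (n : ℕ) (a w : R) :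
    trinomialSum (n + 1) a (w + 1) =
      trinomialSum (n + 1) a w - (n + 1) * trinomialSum n (a + 2) (w + 1) := by
  rw [sub_eq_add_neg, ← sub_eq_iff_eq_add', ← mul_neg]
  simp only [trinomialSum, ← sum_sub_distrib, ← sum_neg_distrib, ← mul_sub, ← mul_neg]
  refine sum_antidiagonal_choose_succ_mul_of_fst
    (f := fun i l ↦ -trinomialTerm (a + 2) (w + 1) i l)
    (g := fun i l ↦ trinomialTerm a (w + 1) i l - trinomialTerm a w i l)
    (fun l ↦ by simp [trinomialTerm]) (fun i l ↦ ?_) n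
  rw [trinomialTerm_succ_left, trinomialTerm_succ_left, trinomialTerm, trinomialTerm]
  linear_combination (-1) ^ (i + 1) * ⦅a + 2 + 2 * i⦆_l *
    (ascPochhammer_eval_add_one_sub w i + ascPochhammer_eval_succ_left w i -
      ascPochhammer_eval_succ_left (w + 1) i)

lemma trinomialSum_add_two (n : ℕ) (a w : R) :
    trinomialSum (n + 2) a w = (a + n + 1) * trinomialSum (n + 1) a w -
      w * trinomialSum (n + 1) (a + 2) (w + 1) - (n + 1) * w * trinomialSum n (a + 2) (w + 1) := by
  rw [sub_eq_add_neg (_ - _), ← sum_antidiagonal_choose_mul_fst_mul_trinomialTerm,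
    trinomialSum, sum_antidiagonal_choose_succ_mul_eq]
  simp only [trinomialSum, mul_sum, ← sum_sub_distrib, ← sum_add_distrib]
  refine sum_congr rfl fun p hp ↦ ?_
  have hsum : (p.1 : R) + p.2 = n + 1 := by exact_mod_cast congrArg _ (mem_antidiagonal.1 hp)
  rw [trinomialTerm_succ_left, trinomialTerm_succ_right]
  linear_combination ((n + 1).choose p.1 : R) * trinomialTerm a w p.1 p.2 * hsum

lemma trinomialSum_add_two' (n : ℕ) (a w : R) :
    trinomialSum (n + 2) a w = a * trinomialSum (n + 1) (a + 1) w -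
      w * trinomialSum (n + 1) (a + 2) (w + 1) -
        2 * (n + 1) * w * trinomialSum n (a + 3) (w + 1) := by
  have hweighted := sum_antidiagonal_choose_mul_fst_mul_trinomialTerm n (a + 1) w
  rw [show a + 1 + 2 = a + 3 by ring] at hweighted
  rw [mul_assoc 2, mul_assoc 2, sub_eq_add_neg (_ - _), ← mul_neg, ← hweighted,
    trinomialSum, sum_antidiagonal_choose_succ_mul_eq]
  simp only [trinomialSum, mul_sum, ← sum_sub_distrib, ← sum_add_distrib]
  refine sum_congr rfl fun p _ ↦ ?_
  rw [trinomialTerm_succ_left, trinomialTerm_succ_right']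
  ring

-- On generating functions this is the substitution `t ↦ t / (t - 1)`, which maps `1 - t + t ^ 2`
-- to `(1 - t + t ^ 2) / (1 - t) ^ 2`.
theorem trinomialSum_reflect (n : ℕ) (a w : R) :
    trinomialSum n a w = (-1) ^ n * trinomialSum n (2 * w + 1 - n - a) w := by
  induction n using Nat.twoStepInduction generalizing a w with
  | zero => rw [trinomialSum_zero, trinomialSum_zero, pow_zero, one_mul]
  | one =>
    rw [trinomialSum_one, trinomialSum_one, Nat.cast_one]
    ring
  | more n ih ih' =>
    set a' := 2 * w + 1 - ((n + 2 : ℕ) : R) - a with ha'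
    have hreflect₀ : trinomialSum (n + 1) a w =
        (-1) ^ (n + 1) * trinomialSum (n + 1) (a' + 1) w := by
      rw [ih', ha']; push_cast; ring_nf
    have hreflect₁ : trinomialSum (n + 1) (a + 1) (w + 1) =
        (-1) ^ (n + 1) * trinomialSum (n + 1) (a' + 2) (w + 1) := by
      rw [ih', ha']; push_cast; ring_nf
    have hreflect₂ : trinomialSum n (a + 1) (w + 1) =
        (-1) ^ n * trinomialSum n (a' + 3) (w + 1) := by
      rw [ih, ha']; push_cast; ring_nf
    have hshift₁ := trinomialSum_add_one_left n a (w + 1)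
    have hshift₂ := trinomialSum_add_one_left n (a + 1) (w + 1)
    rw [show a + 1 + 1 = a + 2 by ring] at hshift₂
    have hshift₃ := trinomialSum_add_one_right n a w
    have ha'_cast : a' = 2 * w - 1 - n - a := by rw [ha']; push_cast; ring
    rw [trinomialSum_add_two, trinomialSum_add_two' n a']
    linear_combination -a' * hreflect₀ + w * hreflect₁ - 2 * (n + 1) * w * hreflect₂ -
      2 * w * hshift₁ - w * hshift₂ - 2 * w * hshift₃ + trinomialSum (n + 1) a w * ha'_cast

theorem trinomialSum_eq_zero_of_odd [IsAddTorsionFree R] {n : ℕ} (hn : Odd n) {a w : R}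
    (hw : 2 * w + 1 = 2 * a + n) : trinomialSum n a w = 0 := by
  have hfixed : 2 * w + 1 - n - a = a := by linear_combination hw
  have hneg := trinomialSum_reflect n a w
  rw [hfixed, hn.neg_one_pow, neg_one_mul] at hneg
  exact self_eq_neg.1 hneg

end CommRing

section Field

variable {K : Type*} [Field K]

/-- The `j`-th term of the balanced series
`₃F₂(-κ / 2, (1 - κ) / 2, p + q - 3 / 2 + κ; p, q; 1)`,
with the first two Pochhammer symbols merged by the duplication formula. -/
noncomputable def saalschutzTerm (p q κ : K) (j : ℕ) : K :=
  ⦅-κ⦆_(2 * j) * ⦅p + q - 3 / 2 + κ⦆_j / (4 ^ j * j.factorial * ⦅p⦆_j * ⦅q⦆_j)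

lemma saalschutzTerm_zero (p q κ : K) : saalschutzTerm p q κ 0 = 1 := by
  simp [saalschutzTerm]

variable [CharZero K]

lemma ascPochhammer_eval_two_mul (a : K) (k : ℕ) :
    ⦅2 * a⦆_(2 * k) = 4 ^ k * ⦅a⦆_k * ⦅a + 1 / 2⦆_k := by
  induction k with
  | zero => simp
  | succ k ih =>
    rw [mul_add_one, ascPochhammer_succ_eval, ascPochhammer_succ_eval, ih,
      ascPochhammer_succ_eval, ascPochhammer_succ_eval]
    push_cast
    ring

lemma ascPochhammer_eval_add_half_ne_zero {b : K} {j : ℕ} (h : ⦅2 * b⦆_(2 * j) ≠ 0) :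
    ⦅b + 1 / 2⦆_j ≠ 0 := by
  rw [ascPochhammer_eval_two_mul] at h
  exact right_ne_zero_of_mul h

-- The Zeilberger recurrence in `κ` for the truncated series, with the certificate on the right-hand
-- side; the latter vanishes for natural `κ ≤ 2 * J`.
lemma sum_saalschutzTerm_telescope {p q : K} (κ : K) {J : ℕ} (hp : ⦅p⦆_J ≠ 0)
    (hq : ⦅q⦆_J ≠ 0) :
    ∑ j ∈ range (J + 1), ((2 * p - 1 + κ) * (2 * q - 1 + κ) * saalschutzTerm p q (κ + 1) j -
        (2 * p - 1 + 2 * κ) * (2 * q - 1 + 2 * κ) * saalschutzTerm p q κ j) =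
      (2 * (p + q - 1) + 3 * κ) * (⦅-κ⦆_(2 * J + 1) * ⦅p + q - 3 / 2 + (κ + 1)⦆_J /
        (4 ^ J * J.factorial * ⦅p⦆_J * ⦅q⦆_J)) := by
  induction J with
  | zero =>
    rw [zero_add, sum_range_one, saalschutzTerm_zero, saalschutzTerm_zero]
    simp only [mul_zero, zero_add, ascPochhammer_zero, ascPochhammer_one, Polynomial.eval_one,
      Polynomial.eval_X, pow_zero, Nat.factorial_zero, Nat.cast_one, mul_one, div_one]
    ring
  | succ j ih =>
    rw [ascPochhammer_succ_eval] at hp hq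
    obtain ⟨hp, hpj⟩ := mul_ne_zero_iff.1 hp
    obtain ⟨hq, hqj⟩ := mul_ne_zero_iff.1 hq
    have hneg_succ : ⦅-(κ + 1)⦆_(2 * (j + 1)) = -(κ + 1) * ⦅-κ⦆_(2 * j + 1) := by
      rw [mul_add_one, ascPochhammer_eval_succ_left, neg_add_rev, neg_add_cancel_comm]
    have hneg : ⦅-κ⦆_(2 * (j + 1)) = ⦅-κ⦆_(2 * j + 1) * (-κ + 2 * j + 1) := by
      rw [mul_add_one, ascPochhammer_succ_eval]
      push_cast
      ring
    rw [sum_range_succ, ih hp hq, saalschutzTerm, saalschutzTerm, hneg_succ,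
      ascPochhammer_succ_eval (2 * (j + 1)), hneg, ascPochhammer_eval_succ_left (_ + κ),
      add_assoc (_ - _) κ 1]
    simp only [ascPochhammer_succ_eval j, Nat.factorial_succ, pow_succ]
    have hfactorial : (j.factorial : K) ≠ 0 := Nat.cast_ne_zero.2 j.factorial_ne_zero
    have hj : (j : K) + 1 ≠ 0 := Nat.cast_add_one_ne_zero j
    push_cast
    field_simp
    ring

theorem ascPochhammer_mul_sum_saalschutzTerm {p q : K} {m k : ℕ} (hk : k ≤ 2 * m + 1)
    (hp : ⦅p⦆_m ≠ 0) (hq : ⦅q⦆_m ≠ 0) :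
    ⦅2 * p - 1⦆_k * ⦅2 * q - 1⦆_k * ∑ j ∈ range (m + 1), saalschutzTerm p q k j =
      4 ^ k * ⦅p - 1 / 2⦆_k * ⦅q - 1 / 2⦆_k := by
  induction k with
  | zero => simp [sum_range_succ', saalschutzTerm, mul_add_one]
  | succ k ih =>
    have hstep := sum_saalschutzTerm_telescope (k : K) hp hq
    rw [ascPochhammer_eval_neg_coe_nat_of_lt (by lia), zero_mul, zero_div, mul_zero,
      sum_sub_distrib, ← mul_sum, ← mul_sum] at hstep
    simp only [ascPochhammer_succ_eval, pow_succ]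
    push_cast
    linear_combination ⦅2 * p - 1⦆_k * ⦅2 * q - 1⦆_k * hstep +
      (2 * p - 1 + 2 * k) * (2 * q - 1 + 2 * k) * ih (by lia)

theorem ascPochhammer_div_eq_sum_saalschutzTerm {b c : K} {m k : ℕ} (hk : k ≤ 2 * m + 1)
    (hb : ⦅2 * b⦆_(2 * m + 1) ≠ 0) (hc : ⦅2 * c⦆_(2 * m + 1) ≠ 0) :
    ⦅b⦆_k * ⦅c⦆_k / (⦅2 * b⦆_k * ⦅2 * c⦆_k) =
      (∑ j ∈ range (m + 1), saalschutzTerm (b + 1 / 2) (c + 1 / 2) k j) / 4 ^ k := by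
  have hsum := ascPochhammer_mul_sum_saalschutzTerm hk
    (ascPochhammer_eval_add_half_ne_zero (ascPochhammer_eval_ne_zero_of_le (by lia) hb))
    (ascPochhammer_eval_add_half_ne_zero (ascPochhammer_eval_ne_zero_of_le (by lia) hc))
  have hdouble (t : K) : 2 * (t + 1 / 2) - 1 = 2 * t := by ring
  rw [hdouble, hdouble, add_sub_cancel_right, add_sub_cancel_right] at hsum
  rw [div_eq_div_iff (mul_ne_zero (ascPochhammer_eval_ne_zero_of_le hk hb)
    (ascPochhammer_eval_ne_zero_of_le hk hc)) (by simp)]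
  linear_combination -hsum

lemma ascPochhammer_mul_div_eq_mul_trinomialTerm {d l i : ℕ} (hi : i ≤ l) {a : K}
    (ha : ⦅a⦆_(2 * (d + l)) ≠ 0) (w : K) :
    ⦅-((d + l : ℕ) : K)⦆_(d + i) * ⦅a + (d + l : ℕ)⦆_(d + i) * ⦅w⦆_(d + i) *
        ⦅-((d + i : ℕ) : K)⦆_d / ((d + i).factorial * ⦅a⦆_(2 * (d + i))) =
      (d + l).descFactorial d * ⦅w⦆_d / ⦅a⦆_(d + l) *
        (l.choose i * trinomialTerm (a + 2 * d) (w + d) i (l - i)) := by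
  have hsplit : ⦅a⦆_(d + l) * ⦅a + (d + l : ℕ)⦆_(d + i) =
      ⦅a⦆_(2 * (d + i)) * ⦅a + 2 * d + 2 * i⦆_(l - i) := by
    have hshift : a + 2 * d + 2 * i = a + (2 * (d + i) : ℕ) := by push_cast; ring
    rw [hshift, ← ascPochhammer_eval_add, ← ascPochhammer_eval_add]
    congr 2
    lia
  have hdesc : ((d + l).descFactorial (d + i) : K) * (d + i).descFactorial d =
      (d + i).factorial * ((d + l).descFactorial d * l.choose i) := by
    exact_mod_cast descFactorial_add_mul_descFactorial d l i
  have hsign : (-1 : K) ^ (d + i) * (-1) ^ d = (-1) ^ i := by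
    rw [pow_add, mul_right_comm, ← mul_pow]
    simp
  have hfactorial : ((d + i).factorial : K) ≠ 0 := Nat.cast_ne_zero.2 (Nat.factorial_ne_zero _)
  rw [div_mul_eq_mul_div, div_eq_div_iff
    (mul_ne_zero hfactorial (ascPochhammer_eval_ne_zero_of_le (by lia) ha))
    (ascPochhammer_eval_ne_zero_of_le (by lia) ha), trinomialTerm,
    ascPochhammer_eval_neg_natCast, ascPochhammer_eval_neg_natCast, ascPochhammer_eval_add w]
  calc
    _ = ((-1) ^ (d + i) * (-1) ^ d) * ⦅w⦆_d * ⦅w + d⦆_i *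
          ((d + l).descFactorial (d + i) * (d + i).descFactorial d) *
          (⦅a⦆_(d + l) * ⦅a + (d + l : ℕ)⦆_(d + i)) := by ring
    _ = _ := by rw [hsign, hdesc, hsplit]; ring

lemma sum_ascPochhammer_mul_div_eq_mul_trinomialSum (d l : ℕ) {a : K}
    (ha : ⦅a⦆_(2 * (d + l)) ≠ 0) (w : K) :
    ∑ k ∈ range (d + l + 1), ⦅-((d + l : ℕ) : K)⦆_k * ⦅a + (d + l : ℕ)⦆_k * ⦅w⦆_k *
        ⦅(-k : K)⦆_d / (k.factorial * ⦅a⦆_(2 * k)) =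
      (d + l).descFactorial d * ⦅w⦆_d / ⦅a⦆_(d + l) * trinomialSum l (a + 2 * d) (w + d) := by
  rw [add_assoc d l 1, sum_range_add, sum_eq_zero, zero_add, trinomialSum,
    Nat.sum_antidiagonal_eq_sum_range_succ_mk, mul_sum]
  · refine sum_congr rfl fun i hi ↦ ascPochhammer_mul_div_eq_mul_trinomialTerm ?_ ha w
    exact Nat.le_of_lt_succ (mem_range.1 hi)
  · intro k hk
    rw [ascPochhammer_eval_neg_coe_nat_of_lt (mem_range.1 hk), mul_zero, zero_div]

lemma sum_mul_saalschutzTerm_eq_zero {a p q : K} {m j : ℕ} (hj : j ≤ m)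
    (hpq : p + q - 3 / 2 = a + m) (ha : ⦅a⦆_(2 * (2 * m + 1)) ≠ 0) :
    ∑ k ∈ range (2 * m + 2), ⦅-((2 * m + 1 : ℕ) : K)⦆_k * ⦅a + (2 * m + 1 : ℕ)⦆_k * ⦅a + m⦆_k /
        (k.factorial * ⦅a⦆_(2 * k)) * saalschutzTerm p q k j = 0 := by
  obtain ⟨M, rfl⟩ := Nat.exists_eq_add_of_le hj
  have hn : 2 * (j + M) + 1 = 2 * j + (2 * M + 1) := by ring
  have hsum := sum_ascPochhammer_mul_div_eq_mul_trinomialSum (2 * j) (2 * M + 1) (hn ▸ ha)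
    (a + (j + M : ℕ) + j)
  rw [trinomialSum_eq_zero_of_odd (odd_two_mul_add_one M) (by push_cast; ring), mul_zero,
    ← hn] at hsum
  calc
    _ = ∑ k ∈ range (2 * (j + M) + 2), ⦅a + (j + M : ℕ)⦆_j / (4 ^ j * j.factorial * ⦅p⦆_j * ⦅q⦆_j) *
          (⦅-((2 * (j + M) + 1 : ℕ) : K)⦆_k * ⦅a + (2 * (j + M) + 1 : ℕ)⦆_k *
            ⦅a + (j + M : ℕ) + j⦆_k * ⦅(-k : K)⦆_(2 * j) / (k.factorial * ⦅a⦆_(2 * k))) := by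
      refine sum_congr rfl fun k _ ↦ ?_
      have hcomm : ⦅a + (j + M : ℕ)⦆_k * ⦅a + (j + M : ℕ) + k⦆_j =
          ⦅a + (j + M : ℕ)⦆_j * ⦅a + (j + M : ℕ) + j⦆_k := by
        rw [← ascPochhammer_eval_add, ← ascPochhammer_eval_add, add_comm k]
      rw [saalschutzTerm, hpq, div_mul_div_comm, div_mul_div_comm]
      congr 1
      · linear_combination ⦅-((2 * (j + M) + 1 : ℕ) : K)⦆_k * ⦅a + (2 * (j + M) + 1 : ℕ)⦆_k *
          ⦅(-k : K)⦆_(2 * j) * hcomm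
      · ring
    _ = 0 := by rw [← mul_sum, hsum, mul_zero]

theorem sum_ascPochhammer_div_eq_zero {α b c : K} {m : ℕ} (hbc : b + c = 2 * α + m + 1 / 2)
    (hα : ⦅α⦆_(2 * m + 1) ≠ 0) (hα' : ⦅α + 1 / 2⦆_(2 * m + 1) ≠ 0)
    (hb : ⦅2 * b⦆_(2 * m + 1) ≠ 0) (hc : ⦅2 * c⦆_(2 * m + 1) ≠ 0) :
    ∑ k ∈ range (2 * m + 2),
        ⦅-((2 * m + 1 : ℕ) : K)⦆_k * ⦅2 * α + (2 * m + 1 : ℕ)⦆_k * ⦅2 * α + m⦆_k * ⦅b⦆_k * ⦅c⦆_k /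
          (k.factorial * ⦅α⦆_k * ⦅α + 1 / 2⦆_k * ⦅2 * b⦆_k * ⦅2 * c⦆_k) = 0 := by
  have hdouble : ⦅2 * α⦆_(2 * (2 * m + 1)) ≠ 0 := by
    rw [ascPochhammer_eval_two_mul]
    exact mul_ne_zero (mul_ne_zero (by simp) hα) hα'
  calc
    _ = ∑ k ∈ range (2 * m + 2), ∑ j ∈ range (m + 1),
          ⦅-((2 * m + 1 : ℕ) : K)⦆_k * ⦅2 * α + (2 * m + 1 : ℕ)⦆_k * ⦅2 * α + m⦆_k /
            (k.factorial * ⦅2 * α⦆_(2 * k)) * saalschutzTerm (b + 1 / 2) (c + 1 / 2) k j := by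
      refine sum_congr rfl fun k hk ↦ ?_
      have hexpand := ascPochhammer_div_eq_sum_saalschutzTerm
        (Nat.le_of_lt_succ (mem_range.1 hk)) hb hc
      rw [← mul_sum, ascPochhammer_eval_two_mul]
      linear_combination ⦅-((2 * m + 1 : ℕ) : K)⦆_k * ⦅2 * α + (2 * m + 1 : ℕ)⦆_k *
        ⦅2 * α + m⦆_k / (k.factorial * ⦅α⦆_k * ⦅α + 1 / 2⦆_k) * hexpand
    _ = 0 := by
      rw [sum_comm]
      exact sum_eq_zero fun j hj ↦ sum_mul_saalschutzTerm_eq_zero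
        (Nat.le_of_lt_succ (mem_range.1 hj)) (by linear_combination hbc) hdouble

theorem andrews_5F4_substituted_general (m : ℕ) (y z : K)
    (h1 : ∀ k ≤ 2 * m + 1, ⦅y / 2 + z + 1 / 2⦆_k ≠ 0)
    (h2 : ∀ k ≤ 2 * m + 1, ⦅y / 2 + z + 1⦆_k ≠ 0)
    (h3 : ∀ k ≤ 2 * m + 1, ⦅2 * z + 2 * m + 2⦆_k ≠ 0)
    (h4 : ∀ k ≤ 2 * m + 1, ⦅2 * y + 2 * z + 1⦆_k ≠ 0) :
    ∑ k ∈ range (2 * m + 2),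
        ⦅(-2 * m - 1 : K)⦆_k * ⦅y + 2 * z + 2 * m + 2⦆_k * ⦅y + z + 1 / 2⦆_k *
            ⦅y + 2 * z + m + 1⦆_k * ⦅z + m + 1⦆_k /
          ((k.factorial : K) * ⦅y / 2 + z + 1 / 2⦆_k * ⦅y / 2 + z + 1⦆_k *
            ⦅2 * z + 2 * m + 2⦆_k * ⦅2 * y + 2 * z + 1⦆_k) = 0 := by
  have hα : y / 2 + z + 1 = y / 2 + z + 1 / 2 + 1 / 2 := by ring
  have hb : 2 * y + 2 * z + 1 = 2 * (y + z + 1 / 2) := by ring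
  have hc : 2 * z + 2 * m + 2 = 2 * (z + m + 1) := by ring
  have hn : (-2 * m - 1 : K) = -((2 * m + 1 : ℕ) : K) := by push_cast; ring
  have hαn : y + 2 * z + 2 * m + 2 = 2 * (y / 2 + z + 1 / 2) + (2 * m + 1 : ℕ) := by
    push_cast; ring
  have hαm : y + 2 * z + m + 1 = 2 * (y / 2 + z + 1 / 2) + m := by ring
  rw [hα] at h2
  rw [hc] at h3
  rw [hb] at h4
  rw [hα, hb, hc, hn, hαn, hαm, ← sum_ascPochhammer_div_eq_zero (by ring) (h1 _ le_rfl)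
    (h2 _ le_rfl) (h4 _ le_rfl) (h3 _ le_rfl)]
  exact sum_congr rfl fun k _ ↦ by ring

end Field

theorem andrews_5F4_substituted (m : ℕ) (y z : ℂ)
    (h1 : ∀ k ≤ 2 * m + 1, rf (y / 2 + z + 1 / 2) k ≠ 0)
    (h2 : ∀ k ≤ 2 * m + 1, rf (y / 2 + z + 1) k ≠ 0)
    (h3 : ∀ k ≤ 2 * m + 1, rf (2 * z + 2 * m + 2) k ≠ 0)
    (h4 : ∀ k ≤ 2 * m + 1, rf (2 * y + 2 * z + 1) k ≠ 0) :
    ∑ k ∈ Finset.range (2 * m + 2),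
        rf (-2 * m - 1) k * rf (y + 2 * z + 2 * m + 2) k * rf (y + z + 1 / 2) k *
            rf (y + 2 * z + m + 1) k * rf (z + m + 1) k /
          ((k.factorial : ℂ) * rf (y / 2 + z + 1 / 2) k * rf (y / 2 + z + 1) k *
            rf (2 * z + 2 * m + 2) k * rf (2 * y + 2 * z + 1) k) = 0 :=
  andrews_5F4_substituted_general m y z h1 h2 h3 h4
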